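/- Let S = [0,1]×[1,2], I = [0,1]×[0,1] and E = [1,2]×[0,1]. If Q₁ and Q₂ are closed axis-aligned unit squares whose interiors each intersect the interior of S ∪ I ∪ E and are each disjoint from the interior of S and from the interior of E, then the interiors of Q₁ and Q₂ intersect each other; consequently, at most one member of any family of pairwise interior-disjoint closed axis-aligned unit squares, each interior-disjoint from S and from E, can intersect the interior of S ∪ I ∪ E. -/

import Mathlib

open Set

/-- The closed axis-aligned unit square with lower-left corner `a`. -/
def unitSq (a : ℝ × ℝ) : Set (ℝ × ℝ) :=
  Set.Icc a.1 (a.1 + 1) ×ˢ Set.Icc a.2 (a.2 + 1)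

/-- Two unit squares, given by their lower-left corners, overlap if their interiors intersect. -/
def Overlap (a b : ℝ × ℝ) : Prop :=
  (interior (unitSq a) ∩ interior (unitSq b)).Nonempty

theorem interior_unitSq (a : ℝ × ℝ) :
    interior (unitSq a) = Set.Ioo a.1 (a.1 + 1) ×ˢ Set.Ioo a.2 (a.2 + 1) := by
  rw [unitSq, interior_prod_eq, interior_Icc, interior_Icc]

theorem overlap_iff (a b : ℝ × ℝ) :
    Overlap a b ↔ (a.1 < b.1 + 1 ∧ b.1 < a.1 + 1) ∧ (a.2 < b.2 + 1 ∧ b.2 < a.2 + 1) := by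
  rw [Overlap, interior_unitSq, interior_unitSq]
  constructor
  · rintro ⟨p, ⟨⟨h1, h2⟩, h3, h4⟩, ⟨h5, h6⟩, h7, h8⟩
    exact ⟨⟨by linarith, by linarith⟩, by linarith, by linarith⟩
  · rintro ⟨⟨h1, h2⟩, h3, h4⟩
    refine ⟨((a.1 + b.1 + 1) / 2, (a.2 + b.2 + 1) / 2), ⟨⟨?_, ?_⟩, ?_, ?_⟩, ⟨?_, ?_⟩, ?_, ?_⟩ <;>
      dsimp only <;> linarith

/-- A square meeting the region but overlapping neither `S` nor `E` has its lower-left corner in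
`(-1, 0] × (-1, 0]`. -/
theorem corner_bounds (q : ℝ × ℝ)
    (h : (interior (unitSq q) ∩
        interior (unitSq (0, 1) ∪ unitSq (0, 0) ∪ unitSq (1, 0))).Nonempty)
    (hS : ¬ Overlap q (0, 1)) (hE : ¬ Overlap q (1, 0)) :
    (-1 < q.1 ∧ q.1 ≤ 0) ∧ (-1 < q.2 ∧ q.2 ≤ 0) := by
  obtain ⟨p, hp, hu⟩ := h
  rw [interior_unitSq] at hp
  obtain ⟨⟨h1, h2⟩, h3, h4⟩ := hp
  rw [overlap_iff] at hS hE
  dsimp only at hS hE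
  rcases interior_subset hu with (⟨⟨h5, h6⟩, h7, h8⟩ | ⟨⟨h5, h6⟩, h7, h8⟩) | ⟨⟨h5, h6⟩, h7, h8⟩ <;>
    dsimp only at h5 h6 h7 h8
  · exact absurd ⟨⟨by linarith, by linarith⟩, by linarith, by linarith⟩ hS
  · refine ⟨⟨by linarith, ?_⟩, by linarith, ?_⟩
    · by_contra hc
      exact hE ⟨⟨by linarith, by linarith⟩, by linarith, by linarith⟩
    · by_contra hc
      exact hS ⟨⟨by linarith, by linarith⟩, by linarith, by linarith⟩
  · exact absurd ⟨⟨by linarith, by linarith⟩, by linarith, by linarith⟩ hE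

theorem overlap_of_meets (q₁ q₂ : ℝ × ℝ)
    (h₁ : (interior (unitSq q₁) ∩
        interior (unitSq (0, 1) ∪ unitSq (0, 0) ∪ unitSq (1, 0))).Nonempty)
    (h₂ : (interior (unitSq q₂) ∩
        interior (unitSq (0, 1) ∪ unitSq (0, 0) ∪ unitSq (1, 0))).Nonempty)
    (hS₁ : ¬ Overlap q₁ (0, 1)) (hE₁ : ¬ Overlap q₁ (1, 0))
    (hS₂ : ¬ Overlap q₂ (0, 1)) (hE₂ : ¬ Overlap q₂ (1, 0)) : Overlap q₁ q₂ := by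
  obtain ⟨⟨a1, a2⟩, a3, a4⟩ := corner_bounds q₁ h₁ hS₁ hE₁
  obtain ⟨⟨b1, b2⟩, b3, b4⟩ := corner_bounds q₂ h₂ hS₂ hE₂
  rw [overlap_iff]
  exact ⟨⟨by linarith, by linarith⟩, by linarith, by linarith⟩

/-- Let `S = [0,1] × [1,2] = unitSq (0,1)`, `I = [0,1] × [0,1] = unitSq (0,0)` and
`E = [1,2] × [0,1] = unitSq (1,0)`.  If `Q₁` and `Q₂` are closed axis-aligned unit squares whose
interiors each intersect the interior of `S ∪ I ∪ E` and are each disjoint from the interior of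
`S` and from the interior of `E`, then the interiors of `Q₁` and `Q₂` intersect each other.
Consequently, at most one member of any family of pairwise interior-disjoint closed axis-aligned
unit squares, each interior-disjoint from `S` and from `E`, can intersect the interior of
`S ∪ I ∪ E`. -/
theorem at_most_one_square_meets_swept_region :
    (∀ q₁ q₂ : ℝ × ℝ,
      (interior (unitSq q₁) ∩
        interior (unitSq (0, 1) ∪ unitSq (0, 0) ∪ unitSq (1, 0))).Nonempty →
      (interior (unitSq q₂) ∩
        interior (unitSq (0, 1) ∪ unitSq (0, 0) ∪ unitSq (1, 0))).Nonempty →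
      ¬ Overlap q₁ (0, 1) → ¬ Overlap q₁ (1, 0) →
      ¬ Overlap q₂ (0, 1) → ¬ Overlap q₂ (1, 0) →
      (interior (unitSq q₁) ∩ interior (unitSq q₂)).Nonempty) ∧
    (∀ (ι : Type) (f : ι → ℝ × ℝ),
      (∀ i j : ι, i ≠ j → ¬ Overlap (f i) (f j)) →
      (∀ i : ι, ¬ Overlap (f i) (0, 1) ∧ ¬ Overlap (f i) (1, 0)) →
      {i : ι | (interior (unitSq (f i)) ∩
        interior (unitSq (0, 1) ∪ unitSq (0, 0) ∪ unitSq (1, 0))).Nonempty}.Subsingleton) := by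
  refine ⟨overlap_of_meets, ?_⟩
  intro ι f hf hSE i hi j hj
  by_contra hij
  exact hf i j hij (overlap_of_meets (f i) (f j) hi hj (hSE i).1 (hSE i).2 (hSE j).1 (hSE j).2)
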